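/- Let F be a number field, and let b_1, ..., b_m be nonzero algebraic integers in F such that b_i/b_j is not a root of unity for all i ≠ j, and let c_1, ..., c_m ∈ F not all zero. Then the set of positive integers r satisfying Σ_{j=1}^m c_j b_j^r = 0 is finite. -/

import Mathlib

/-!
Hansel's argument. Suppose that `p ^ 2` divides every `b j - 1` in a `p`-adically separated domain
of characteristic zero. Then `∑ j, c j * b j ^ n` is the binomial transform of
`s k = ∑ j, c j * (b j - 1) ^ k`, and `p ^ (2 * k)` divides `s k`. Since `k !` divides `p ^ k` up
to a factor prime to `p`, the sum is, up to such a factor and for `n` below any given bound, a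
polynomial in `n` whose `k`-th coefficient is divisible by `p ^ k`. If this polynomial has `e`
roots, the monic polynomial with these roots divides it; modulo `p ^ e` its degree is less than
`e`, so there it vanishes. Hence infinitely many zeros force the sum to vanish identically, and
then `c = 0` by the independence of characters. If `p ^ 2` only divides every `b j ^ d - 1`, this
applies to each residue class of exponents modulo `d`.

A suitable domain exists in every field of characteristic zero. By Noether normalization, `b`,
`b⁻¹` and `c` are, up to an integer factor `N`, integral over a polynomial ring `ℤ[t]`. Choose `p`
prime to `N` and divide the variables by `q = p ^ 2`: in the ring `A` generated by `s = t / q` and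
the multiples by `N` of `b`, `b⁻¹` and `c`, the variables `t` vanish modulo `q`, so `N * b j` is
integral over `ℤ` modulo `q`. As it is also a unit there, some power of it is `1`. Finally `A` is
Noetherian, and `p` is not a unit of `A` since `A` is integral over `ℤ[s]`; so `A` is `p`-adically
separated.
-/

section Hansel

open Polynomial
open scoped Nat

theorem factorial_dvd_ordCompl_factorial_mul_pow {p k M : ℕ} (hp : p.Prime) (hk : k ≤ M) :
    k ! ∣ ordCompl[p] M ! * p ^ k := by
  have : Fact p.Prime := ⟨hp⟩
  have hval : (k !).factorization p ≤ k :=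
    (Nat.factorization_def _ hp).trans_le (padicValNat_factorial_le (p := p) k)
  rw [← Nat.ordProj_mul_ordCompl_eq_self (k !) p, mul_comm]
  exact mul_dvd_mul (Nat.ordCompl_dvd_ordCompl_of_dvd (Nat.factorial_dvd_factorial hk) p)
    (pow_dvd_pow p hval)

theorem eq_zero_of_forall_pow_dvd {R : Type*} [CommRing R] {r x : R}
    [h : IsHausdorff (Ideal.span {r}) R] (hx : ∀ e : ℕ, r ^ e ∣ x) : x = 0 :=
  h.haus x fun e ↦ by
    simpa [SModEq.zero, Ideal.span_singleton_pow, Ideal.mem_span_singleton] using hx e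

/-- The binomial transform `n ↦ ∑ k ≤ n, n.choose k * s k` of a sequence `s`: the sequence whose
`k`-th forward difference at `0` is `s k`. -/
def binomialTransform {R : Type*} [Semiring R] (s : ℕ → R) (n : ℕ) : R :=
  ∑ k ∈ Finset.range (n + 1), n.choose k * s k

theorem binomialTransform_sum_mul_pow {R ι : Type*} [CommSemiring R] [Fintype ι] (c x : ι → R)
    (n : ℕ) :
    binomialTransform (fun k ↦ ∑ j, c j * x j ^ k) n = ∑ j, c j * (x j + 1) ^ n := by
  simp only [binomialTransform, add_pow, one_pow, mul_one, Finset.mul_sum]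
  rw [Finset.sum_comm]
  exact Finset.sum_congr rfl fun j _ ↦ Finset.sum_congr rfl fun k _ ↦ by ring

theorem binomialTransform_eq_sum_range {R : Type*} [Semiring R] (s : ℕ → R) {n M : ℕ}
    (hn : n ≤ M) :
    binomialTransform s n = ∑ k ∈ Finset.range (M + 1), n.choose k * s k := by
  refine Finset.sum_subset (Finset.range_subset_range.2 (by lia)) fun k _ hk ↦ ?_
  rw [Nat.choose_eq_zero_of_lt (by simpa using hk), Nat.cast_zero, zero_mul]

theorem finite_setOf_of_finite_add_mul {P : ℕ → Prop} {d : ℕ} (hd : 0 < d)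
    (h : ∀ a < d, {n | P (a + d * n)}.Finite) : {r | P r}.Finite := by
  refine ((Set.finite_lt_nat d).biUnion fun a ha ↦ (h a ha).image (a + d * ·)).subset
    fun r (hr : P r) ↦ ?_
  refine Set.mem_biUnion (Nat.mod_lt r hd) ⟨r / d, ?_, Nat.mod_add_div r d⟩
  rwa [Set.mem_ofPred_eq, Nat.mod_add_div]

section IsDomain

variable {R : Type*} [CommRing R] [IsDomain R]

theorem C_dvd_of_forall_isRoot {P : R[X]} {T : Finset R} {q : R} (hT : ∀ x ∈ T, P.IsRoot x)
    (hq : ∀ k, T.card ≤ k → q ∣ P.coeff k) : C q ∣ P := by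
  rcases eq_or_ne P 0 with rfl | hP
  · exact dvd_zero _
  set D : R[X] := ∏ x ∈ T, (X - C x)
  have hD : D.Monic := monic_prod_X_sub_C _ _
  have hDP : D ∣ P := by
    refine (Multiset.prod_X_sub_C_dvd_iff_le_roots hP T.val).2 ?_
    rw [Multiset.le_iff_subset T.nodup]
    exact fun x hx ↦ (mem_roots hP).2 (hT x hx)
  let π := Ideal.Quotient.mk (Ideal.span {q})
  have hπ (x : R) : π x = 0 ↔ q ∣ x := Ideal.Quotient.eq_zero_iff_dvd q x
  suffices P.map π = 0 from (C_dvd_iff_dvd_coeff q P).2 fun k ↦ by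
    rw [← hπ, ← coeff_map, this, coeff_zero]
  by_contra h0
  have := Nontrivial.of_polynomial_ne h0
  refine (hD.map π).not_dvd_of_degree_lt h0 ?_ (Polynomial.map_dvd π hDP)
  rw [hD.degree_map, degree_eq_natDegree hD.ne_zero, natDegree_finsetProd_X_sub_C_eq_card,
    degree_lt_iff_coeff_zero]
  exact fun k hk ↦ by rw [coeff_map, hπ]; exact hq k hk

theorem exists_polynomial_eval_eq_binomialTransform {p : ℕ} (hp : p.Prime) {s : ℕ → R}
    (hs : ∀ k, (p : R) ^ (2 * k) ∣ s k) (M : ℕ) :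
    ∃ P : R[X], (∀ k, (p : R) ^ k ∣ P.coeff k) ∧
      ∀ n ≤ M, P.eval (n : R) = (ordCompl[p] M ! : ℕ) * binomialTransform s n := by
  have hcoeff (k : ℕ) (hk : k ≤ M) :
      ∃ a, (p : R) ^ k ∣ a ∧ (ordCompl[p] M ! : ℕ) * s k = k ! * a := by
    obtain ⟨z, hz⟩ := factorial_dvd_ordCompl_factorial_mul_pow hp hk
    obtain ⟨w, hw⟩ := hs k
    refine ⟨p ^ k * (z * w), dvd_mul_right _ _, ?_⟩
    have hz' : ((ordCompl[p] M ! : ℕ) : R) * p ^ k = k ! * z := mod_cast congrArg Nat.cast hz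
    rw [hw]
    linear_combination (p : R) ^ k * w * hz'
  choose! a ha has using hcoeff
  refine ⟨∑ k ∈ Finset.range (M + 1), C (a k) * descPochhammer R k, fun j ↦ ?_, fun n hn ↦ ?_⟩
  · rw [finsetSum_coeff]
    refine Finset.dvd_sum fun k hk ↦ ?_
    rw [coeff_C_mul]
    rcases le_or_gt j k with hjk | hkj
    · exact ((pow_dvd_pow _ hjk).trans (ha k (by simpa [Nat.lt_succ_iff] using hk))).mul_right _
    · rw [coeff_eq_zero_of_natDegree_lt (by rwa [descPochhammer_natDegree]), mul_zero]
      exact dvd_zero _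
  · rw [binomialTransform_eq_sum_range s hn, eval_finsetSum, Finset.mul_sum]
    refine Finset.sum_congr rfl fun k hk ↦ ?_
    rw [eval_mul, eval_C, descPochhammer_eval_eq_descFactorial,
      Nat.descFactorial_eq_factorial_mul_choose, Nat.cast_mul]
    linear_combination -(n.choose k : R) * has k (by simpa [Nat.lt_succ_iff] using hk)

theorem binomialTransform_eq_zero_of_infinite [CharZero R] {p : ℕ} (hp : p.Prime)
    [IsHausdorff (Ideal.span {(p : R)}) R] {s : ℕ → R} (hs : ∀ k, (p : R) ^ (2 * k) ∣ s k)
    (hinf : {n | binomialTransform s n = 0}.Infinite) (n : ℕ) : binomialTransform s n = 0 := by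
  refine eq_zero_of_forall_pow_dvd (r := (p : R)) fun e ↦ ?_
  obtain ⟨T, hT, rfl⟩ := hinf.exists_subset_card_eq e
  set M := max n (T.sup id)
  obtain ⟨P, hcoeff, heval⟩ := exists_polynomial_eval_eq_binomialTransform hp hs M
  have hroots : ∀ x ∈ T.map Nat.castEmbedding, P.IsRoot (x : R) := by
    simp only [Finset.mem_map, Nat.castEmbedding_apply, forall_exists_index, and_imp,
      forall_apply_eq_imp_iff₂]
    intro r hr
    have hrM : r ≤ M := (Finset.le_sup (f := id) hr).trans (le_max_right _ _)
    rw [IsRoot.def, heval r hrM, show binomialTransform s r = 0 from hT hr, mul_zero]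
  have hP : C ((p : R) ^ T.card) ∣ P := C_dvd_of_forall_isRoot hroots fun k hk ↦
    (pow_dvd_pow _ (by simpa using hk)).trans (hcoeff k)
  have hdvd : (p : R) ^ T.card ∣ (ordCompl[p] M ! : ℕ) * binomialTransform s n := by
    rw [← heval n (le_max_left _ _)]
    simpa using eval_dvd (x := (n : R)) hP
  have hcop : IsCoprime ((p : R) ^ T.card) (ordCompl[p] M ! : ℕ) :=
    (Nat.coprime_ordCompl hp M.factorial_ne_zero).cast.pow_left
  exact hcop.dvd_of_dvd_mul_left hdvd

variable {ι : Type*} [Fintype ι]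

theorem eq_zero_of_forall_sum_mul_pow_eq_zero {c b : ι → R} (hb : Function.Injective b)
    (h : ∀ n : ℕ, ∑ j, c j * b j ^ n = 0) : c = 0 := by
  have hpow : Function.Injective fun j ↦ powersHom R (b j) := (powersHom R).injective.comp hb
  have hli := (linearIndependent_monoidHom (Multiplicative ℕ) R).comp _ hpow
  refine funext <| Fintype.linearIndependent_iff.1 hli c <| funext fun n ↦ ?_
  simpa using h n.toAdd

theorem finite_setOf_sum_mul_pow_eq_zero_of_sq_dvd_sub_one [CharZero R] {p : ℕ} (hp : p.Prime)
    [IsHausdorff (Ideal.span {(p : R)}) R] {c b : ι → R} (hb : Function.Injective b)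
    (hbp : ∀ j, (p : R) ^ 2 ∣ b j - 1) (hc : c ≠ 0) :
    {n : ℕ | ∑ j, c j * b j ^ n = 0}.Finite := by
  by_contra hinf
  have htransform (n : ℕ) :
      binomialTransform (fun k ↦ ∑ j, c j * (b j - 1) ^ k) n = ∑ j, c j * b j ^ n := by
    simp only [binomialTransform_sum_mul_pow, sub_add_cancel]
  have hdvd (k : ℕ) : (p : R) ^ (2 * k) ∣ ∑ j, c j * (b j - 1) ^ k :=
    Finset.dvd_sum fun j _ ↦ (pow_mul (p : R) 2 k ▸ pow_dvd_pow_of_dvd (hbp j) k).mul_left _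
  simp only [← htransform] at hinf
  refine hc (eq_zero_of_forall_sum_mul_pow_eq_zero hb fun n ↦ ?_)
  rw [← htransform]
  exact binomialTransform_eq_zero_of_infinite hp hdvd hinf n

theorem finite_setOf_sum_mul_pow_eq_zero_of_sq_dvd_pow_sub_one [CharZero R] {p d : ℕ}
    (hp : p.Prime) [IsHausdorff (Ideal.span {(p : R)}) R] {c b : ι → R} (hb0 : ∀ j, b j ≠ 0)
    (hd : 0 < d) (hb : Function.Injective fun j ↦ b j ^ d) (hbp : ∀ j, (p : R) ^ 2 ∣ b j ^ d - 1)
    (hc : c ≠ 0) : {r : ℕ | ∑ j, c j * b j ^ r = 0}.Finite := by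
  obtain ⟨i, hi⟩ := Function.ne_iff.1 hc
  refine finite_setOf_of_finite_add_mul hd fun a _ ↦ ?_
  have hca : (fun j ↦ c j * b j ^ a) ≠ 0 :=
    Function.ne_iff.2 ⟨i, mul_ne_zero hi (pow_ne_zero a (hb0 i))⟩
  simpa only [pow_add, pow_mul, mul_assoc] using
    finite_setOf_sum_mul_pow_eq_zero_of_sq_dvd_sub_one hp hb hbp hca

end IsDomain

end Hansel

section Model

open MvPolynomial

theorem algebraicIndependent_smul_of_isUnit {σ R A : Type*} [CommRing R] [CommRing A]
    [Algebra R A] {t : σ → A} (ht : AlgebraicIndependent R t) {q : R} (hq : IsUnit q) :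
    AlgebraicIndependent R (q • t) := by
  have h : Transcendental R (q • (Polynomial.X : Polynomial R)) := fun halg ↦ by
    obtain ⟨u, rfl⟩ := hq
    refine Polynomial.transcendental_X R ?_
    simpa only [smul_smul, Units.inv_mul, one_smul] using halg.smul (↑u⁻¹ : R)
  simpa using! ht.polynomial_aeval_of_transcendental fun _ ↦ h

/-- `x` is integral over the subalgebra `R[s]` generated by the family `s`. This is phrased through
the polynomial ring mapping onto `R[s]`, so that it can be transported along ring homomorphisms. -/
def IsIntegralOverAdjoin (R : Type*) {A σ : Type*} [CommRing R] [CommRing A] [Algebra R A]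
    (s : σ → A) (x : A) : Prop :=
  (eval₂Hom (algebraMap R A) s).IsIntegralElem x

namespace IsIntegralOverAdjoin

section CommRing

variable {R A B σ : Type*} [CommRing R] [CommRing A] [CommRing B] [Algebra R A] [Algebra R B]
  {s : σ → A} {q : R} {x : A}

theorem of_generator (i : σ) : IsIntegralOverAdjoin R s (s i) := by
  simpa [IsIntegralOverAdjoin] using (eval₂Hom (algebraMap R A) s).isIntegralElem_map (x := X i)

theorem of_base (r : R) : IsIntegralOverAdjoin R s (algebraMap R A r) := by
  simpa [IsIntegralOverAdjoin] using (eval₂Hom (algebraMap R A) s).isIntegralElem_map (x := C r)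

theorem of_mem_adjoin {S : Set A} (hS : ∀ x ∈ S, IsIntegralOverAdjoin R s x)
    (hx : x ∈ Algebra.adjoin R S) : IsIntegralOverAdjoin R s x := by
  induction hx using Algebra.adjoin_induction with
  | mem x hx => exact hS x hx
  | algebraMap r => exact of_base r
  | add x y _ _ hx hy => exact RingHom.IsIntegralElem.add _ hx hy
  | mul x y _ _ hx hy => exact RingHom.IsIntegralElem.mul _ hx hy

theorem of_smul (hx : IsIntegralOverAdjoin R (q • s) x) : IsIntegralOverAdjoin R s x := by
  have h : eval₂Hom (algebraMap R A) (q • s) =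
      (eval₂Hom (algebraMap R A) s).comp (eval₂Hom C (q • X)) := by
    ext <;> simp [Algebra.smul_def]
  rw [IsIntegralOverAdjoin, h] at hx
  exact hx.of_comp

theorem of_map {f : A →ₐ[R] B} (hf : Function.Injective f)
    (hx : IsIntegralOverAdjoin R (f ∘ s) (f x)) : IsIntegralOverAdjoin R s x := by
  have h : eval₂Hom (algebraMap R B) (f ∘ s) =
      f.toRingHom.comp (eval₂Hom (algebraMap R A) s) := by
    ext <;> simp
  rw [IsIntegralOverAdjoin, h] at hx
  exact RingHom.IsIntegralElem.of_map hf hx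

theorem isIntegral_quotientMk (hx : IsIntegralOverAdjoin R (q • s) x) :
    IsIntegral R (Ideal.Quotient.mk (Ideal.span {algebraMap R A q}) x) := by
  let π := Ideal.Quotient.mk (Ideal.span {algebraMap R A q})
  have hq : π (algebraMap R A q) = 0 :=
    (Ideal.Quotient.eq_zero_iff_dvd _ _).2 dvd_rfl
  have hconst : π.comp (eval₂Hom (algebraMap R A) (q • s)) =
      (algebraMap R _).comp constantCoeff := by
    ext i
    · simp [π, ← Ideal.Quotient.mk_algebraMap]
    · simp [Algebra.smul_def, hq]
  have hπx : ((algebraMap R _).comp constantCoeff).IsIntegralElem (π x) :=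
    hconst ▸ RingHom.IsIntegralElem.map hx π
  exact hπx.of_comp

end CommRing

theorem isUnit_of_inv {R K σ : Type*} [CommRing R] [Field K] [Algebra R K] {s : σ → K}
    (hs : AlgebraicIndependent R s) {r : R} (hr : r ≠ 0)
    (h : IsIntegralOverAdjoin R s (algebraMap R K r)⁻¹) : IsUnit r := by
  algebraize [eval₂Hom (algebraMap R K) s]
  let S := integralClosure (MvPolynomial σ R) K
  have : FaithfulSMul (MvPolynomial σ R) S :=
    (faithfulSMul_iff_algebraMap_injective _ _).2 <| .of_comp (f := algebraMap S K) hs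
  have hunit : IsUnit (algebraMap (MvPolynomial σ R) S (C r)) := by
    refine .of_mul_eq_one ⟨(algebraMap R K r)⁻¹, h⟩ (Subtype.ext ?_)
    change eval₂Hom _ s (C r) * _ = 1
    have hr' : algebraMap R K r ≠ 0 := (map_ne_zero_iff _ hs.algebraMap_injective).2 hr
    simp [hr']
  simpa using (isUnit_of_map_unit _ _ hunit).map (constantCoeff (R := R) (σ := σ))

variable {A σ : Type*} [CommRing A] [Algebra ℚ A] {t : σ → A}

attribute [local instance] MvPolynomial.algebraMvPolynomial in
theorem exists_intCast_mul {x : A} (hx : IsIntegralOverAdjoin ℚ t x) :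
    ∃ N : ℤ, N ≠ 0 ∧ IsIntegralOverAdjoin ℤ t (N * x) := by
  algebraize [eval₂Hom (algebraMap ℚ A) t, eval₂Hom (algebraMap ℤ A) t]
  have : IsScalarTower (MvPolynomial σ ℤ) (MvPolynomial σ ℚ) A :=
    .of_algebraMap_eq' (by ext <;> simp [RingHom.algebraMap_toAlgebra])
  obtain ⟨⟨_, N, hN, rfl⟩, h⟩ := IsIntegral.exists_multiple_integral_of_isLocalization
    ((nonZeroDivisors ℤ).map (C (σ := σ))) x hx
  refine ⟨N, nonZeroDivisors.ne_zero hN, ?_⟩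
  have hC : algebraMap (MvPolynomial σ ℤ) A (C N) = N := by
    simp [RingHom.algebraMap_toAlgebra]
  rwa [Submonoid.smul_def, Algebra.smul_def, hC] at h

theorem exists_forall_intCast_mul {ι : Type*} [Finite ι] {x : ι → A}
    (hx : ∀ i, IsIntegralOverAdjoin ℚ t (x i)) :
    ∃ N : ℤ, N ≠ 0 ∧ ∀ i, IsIntegralOverAdjoin ℤ t (N * x i) := by
  cases nonempty_fintype ι
  choose N hN hNx using fun i ↦ exists_intCast_mul (hx i)
  refine ⟨∏ i, N i, Finset.prod_ne_zero_iff.2 fun i _ ↦ hN i, fun i ↦ ?_⟩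
  obtain ⟨k, hk⟩ := Finset.dvd_prod_of_mem N (Finset.mem_univ i)
  rw [hk, Int.cast_mul, mul_right_comm, mul_comm]
  exact RingHom.IsIntegralElem.mul _ (of_base k) (hNx i)

end IsIntegralOverAdjoin

section Field

variable {K ι : Type*} [Field K] [Finite ι]

theorem exists_algebraicIndependent_isIntegralOverAdjoin (k : Type*) [Field k] [Algebra k K]
    (x : ι → K) :
    ∃ (m : ℕ) (t : Fin m → K), AlgebraicIndependent k t ∧
      ∀ i, IsIntegralOverAdjoin k t (x i) := by
  let A := Algebra.adjoin k (Set.range x)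
  have : Algebra.FiniteType k A := .adjoin_of_finite (Set.finite_range x)
  obtain ⟨m, g, hginj, hgint⟩ := exists_integral_inj_algHom_of_fg k A
  refine ⟨m, fun i ↦ g (X i), ?_, fun i ↦ ?_⟩
  · have haeval : aeval (fun i ↦ (g (X i) : K)) = A.val.comp g := by ext; simp
    rw [AlgebraicIndependent, haeval]
    exact Subtype.val_injective.comp hginj
  · have heval : eval₂Hom (algebraMap k K) (fun i ↦ (g (X i) : K)) =
        A.val.toRingHom.comp g.toRingHom := by
      ext <;> simp
    rw [IsIntegralOverAdjoin, heval]
    exact (hgint ⟨x i, Algebra.subset_adjoin ⟨i, rfl⟩⟩).map A.val.toRingHom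

theorem exists_noetherian_subalgebra_of_isIntegralOverAdjoin {m : ℕ} {q : ℤ} {s : Fin m → K}
    (hs : AlgebraicIndependent ℤ s) {x : ι → K}
    (hx : ∀ i, IsIntegralOverAdjoin ℤ (q • s) (x i)) :
    ∃ A : Subalgebra ℤ K, IsNoetherianRing A ∧ (∀ n : ℤ, IsUnit (n : A) → IsUnit n) ∧
      ∃ y : ι → A, (∀ i, y i = x i) ∧
        ∀ i, IsIntegral ℤ (Ideal.Quotient.mk (Ideal.span {(q : A)}) (y i)) := by
  let A := Algebra.adjoin ℤ (Set.range s ∪ Set.range x)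
  let s' (i) : A := ⟨s i, Algebra.subset_adjoin (.inl ⟨i, rfl⟩)⟩
  let y (i) : A := ⟨x i, Algebra.subset_adjoin (.inr ⟨i, rfl⟩)⟩
  have : Algebra.FiniteType ℤ A :=
    .adjoin_of_finite ((Set.finite_range s).union (Set.finite_range x))
  refine ⟨A, Algebra.FiniteType.isNoetherianRing ℤ A, fun n hn ↦ ?_, y, fun i ↦ rfl, fun i ↦ ?_⟩
  · obtain ⟨u, hu⟩ := hn.exists_right_inv
    have hnu : (n : K) * u = 1 := by simpa using congrArg A.val hu
    refine IsIntegralOverAdjoin.isUnit_of_inv hs (fun h0 ↦ by simp [h0] at hnu) ?_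
    rw [eq_intCast, inv_eq_of_mul_eq_one_right hnu]
    refine IsIntegralOverAdjoin.of_mem_adjoin (fun z hz ↦ ?_) u.2
    rcases hz with ⟨i, rfl⟩ | ⟨i, rfl⟩
    · exact .of_generator i
    · exact (hx i).of_smul
  · have h : IsIntegralOverAdjoin ℤ (q • s') (y i) :=
      .of_map (f := A.val) Subtype.val_injective (hx i)
    simpa using h.isIntegral_quotientMk

theorem exists_noetherian_subalgebra_isIntegral_quotientMk [CharZero K] (x : ι → K) :
    ∃ N : ℤ, N ≠ 0 ∧ ∀ q : ℤ, q ≠ 0 →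
      ∃ A : Subalgebra ℤ K, IsNoetherianRing A ∧ (∀ n : ℤ, IsUnit (n : A) → IsUnit n) ∧
        ∃ y : ι → A, (∀ i, y i = N * x i) ∧
          ∀ i, IsIntegral ℤ (Ideal.Quotient.mk (Ideal.span {(q : A)}) (y i)) := by
  obtain ⟨m, t, ht, hx⟩ := exists_algebraicIndependent_isIntegralOverAdjoin ℚ x
  obtain ⟨N, hN, hNx⟩ := IsIntegralOverAdjoin.exists_forall_intCast_mul hx
  refine ⟨N, hN, fun q hq ↦ ?_⟩
  have hq' : (q : ℚ) ≠ 0 := Int.cast_ne_zero.2 hq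
  have hs : AlgebraicIndependent ℤ ((q : ℚ)⁻¹ • t) :=
    (algebraicIndependent_smul_of_isUnit ht (inv_ne_zero hq').isUnit).restrictScalars
      Int.cast_injective
  have hqs : q • (q : ℚ)⁻¹ • t = t := by rw [← Int.cast_smul_eq_zsmul ℚ, smul_inv_smul₀ hq']
  exact exists_noetherian_subalgebra_of_isIntegralOverAdjoin hs (by rwa [hqs])

end Field

section CommRing

variable {A ι : Type*} [CommRing A]

theorem isOfFinOrder_of_isIntegral_int {n : ℤ} (hn : n ≠ 0) (hnA : (n : A) = 0) {u : A}
    (hu : IsUnit u) (hintegral : IsIntegral ℤ u) : IsOfFinOrder u := by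
  obtain ⟨v, rfl⟩ := hu
  let S := Algebra.adjoin ℤ {(v : A)}
  have : Module.Finite ℤ S := .of_fg hintegral.fg_adjoin_singleton
  have : Finite S := by
    refine Module.finite_of_fg_torsion S fun y ↦ ⟨⟨n, by simpa⟩, Subtype.ext ?_⟩
    simp [Submonoid.smul_def, hnA]
  refine Units.isOfFinOrder_val.2 <| finite_powers.1 ?_
  refine ((S : Set A).toFinite.preimage Units.val_injective.injOn).subset ?_
  rintro _ ⟨k, rfl⟩
  exact pow_mem (Algebra.self_mem_adjoin_singleton ℤ (v : A)) k

theorem exists_forall_dvd_pow_sub_one [Finite ι] {q : ℤ} (hq : q ≠ 0) {b : ι → A}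
    (hintegral : ∀ i, IsIntegral ℤ (Ideal.Quotient.mk (Ideal.span {(q : A)}) (b i)))
    (hcop : ∀ i, IsCoprime (b i) (q : A)) : ∃ d, 0 < d ∧ ∀ i, (q : A) ∣ b i ^ d - 1 := by
  let π := Ideal.Quotient.mk (Ideal.span {(q : A)})
  have hπ (x : A) : π x = 0 ↔ (q : A) ∣ x := Ideal.Quotient.eq_zero_iff_dvd _ x
  have hπq : (q : A ⧸ Ideal.span {(q : A)}) = 0 := by simpa using (hπ q).2 dvd_rfl
  have hunit (i : ι) : IsUnit (π (b i)) := by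
    obtain ⟨u, v, huv⟩ := hcop i
    refine .of_mul_eq_one (π u) ?_
    simpa [hπq, mul_comm] using congrArg π huv
  obtain ⟨d, hd, h⟩ := isOfFinOrder_iff_pow_eq_one.1 <|
    IsOfFinOrder.pi fun i ↦ isOfFinOrder_of_isIntegral_int hq hπq (hunit i) (hintegral i)
  refine ⟨d, hd, fun i ↦ (hπ _).1 ?_⟩
  simpa [sub_eq_zero] using! congrFun h i

end CommRing

theorem exists_hausdorff_subalgebra_sq_dvd_pow_sub_one {K ι : Type*} [Field K] [CharZero K]
    [Finite ι] {b : ι → K} (hb : ∀ j, b j ≠ 0) (c : ι → K) :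
    ∃ (p : ℕ) (A : Subalgebra ℤ K) (N : ℤ) (b' c' : ι → A) (d : ℕ),
      p.Prime ∧ IsHausdorff (Ideal.span {(p : A)}) A ∧ N ≠ 0 ∧ (∀ j, b' j = N * b j) ∧
        (∀ j, c' j = N * c j) ∧ 0 < d ∧ ∀ j, (p : A) ^ 2 ∣ b' j ^ d - 1 := by
  obtain ⟨N, hN, h⟩ :=
    exists_noetherian_subalgebra_isIntegral_quotientMk (Sum.elim c (Sum.elim b b⁻¹))
  obtain ⟨p, hpN, hp⟩ := Nat.exists_infinite_primes (N.natAbs + 1)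
  have hcop : IsCoprime N p := Int.isCoprime_iff_gcd_eq_one.2
    (Nat.coprime_of_lt_prime (Int.natAbs_ne_zero.2 hN) hpN hp).symm
  have hq : (p : ℤ) ^ 2 ≠ 0 := pow_ne_zero 2 (Nat.cast_ne_zero.2 hp.ne_zero)
  obtain ⟨A, _, hunit, y, hy, hintegral⟩ := h _ hq
  let c' (j) := y (.inl j)
  let b' (j) := y (.inr (.inl j))
  let binv' (j) := y (.inr (.inr j))
  have hbinv (j : ι) : b' j * binv' j = (N ^ 2 : ℤ) := by
    refine Subtype.ext ?_
    have hinv : (N * b j) * (N * (b j)⁻¹) = (N : K) ^ 2 := by field_simp [hb j]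
    simpa [b', binv', hy] using hinv
  have hbcop (j : ι) : IsCoprime (b' j) ((p ^ 2 : ℤ) : A) := by
    refine .of_mul_left_left (y := binv' j) ?_
    rw [hbinv]
    exact hcop.pow.intCast
  obtain ⟨d, hd, hdvd⟩ := exists_forall_dvd_pow_sub_one hq (fun j ↦ hintegral (.inr (.inl j))) hbcop
  have htop : Ideal.span {(p : A)} ≠ ⊤ := by
    rw [Ne, Ideal.span_singleton_eq_top]
    exact fun hpA ↦ (Nat.prime_iff_prime_int.1 hp).not_isUnit (hunit p (by simpa using hpA))
  exact ⟨p, A, N, b', c', d, hp, .of_isDomain _ htop, hN, fun j ↦ hy _, fun j ↦ hy _, hd,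
    by simpa using hdvd⟩

end Model

theorem stmt_14_general {K ι : Type*} [Field K] [CharZero K] [Fintype ι] (b c : ι → K)
    (hb0 : ∀ i, b i ≠ 0)
    (hratio : ∀ i j, i ≠ j → ∀ n : ℕ, 0 < n → (b i / b j) ^ n ≠ 1) (hc : ∃ i, c i ≠ 0) :
    {r : ℕ | ∑ j, c j * b j ^ r = 0}.Finite := by
  obtain ⟨p, A, N, b', c', d, hp, _, hN, hb', hc', hd, hdvd⟩ :=
    exists_hausdorff_subalgebra_sq_dvd_pow_sub_one hb0 c
  have hNK : (N : K) ≠ 0 := Int.cast_ne_zero.2 hN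
  have hb0' (j : ι) : b' j ≠ 0 := by simp [← Subtype.coe_ne_coe, hb', hNK, hb0]
  have hinj : Function.Injective fun j ↦ b' j ^ d := fun i j hij ↦ by
    have hpow : (N * b i) ^ d = (N * b j) ^ d := by simpa [hb'] using congrArg A.val hij
    by_contra hne
    refine hratio i j hne d hd ?_
    rw [← mul_div_mul_left _ _ hNK, div_pow, hpow, div_self]
    exact pow_ne_zero d (mul_ne_zero hNK (hb0 j))
  have hc0' : c' ≠ 0 := by
    obtain ⟨i, hi⟩ := hc
    refine Function.ne_iff.2 ⟨i, ?_⟩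
    simp [← Subtype.coe_ne_coe, hc', hNK, hi]
  refine (finite_setOf_sum_mul_pow_eq_zero_of_sq_dvd_pow_sub_one hp hb0' hd hinj hdvd hc0').subset
    fun r (hr : ∑ j, c j * b j ^ r = 0) ↦ Subtype.ext ?_
  calc ((∑ j, c' j * b' j ^ r : A) : K) = N ^ (r + 1) * ∑ j, c j * b j ^ r := by
        simp only [AddSubmonoidClass.coe_finsetSum, MulMemClass.coe_mul, SubmonoidClass.coe_pow,
          hb', hc', Finset.mul_sum]
        exact Finset.sum_congr rfl fun j _ ↦ by ring
    _ = 0 := by rw [hr, mul_zero]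

/-- Let `F` be a number field and `b₁,…,b_m` nonzero algebraic integers in `F` such that
`b_i/b_j` is not a root of unity for `i ≠ j`, and `c₁,…,c_m ∈ F` not all zero.  Then the set
of positive integers `r` with `Σ_j c_j b_j^r = 0` is finite. -/
theorem stmt_14 (F : Type*) [Field F] [NumberField F] (m : ℕ)
    (b c : Fin m → F) (hbint : ∀ i, IsIntegral ℤ (b i)) (hb0 : ∀ i, b i ≠ 0)
    (hratio : ∀ i j, i ≠ j → ∀ n : ℕ, 0 < n → (b i / b j) ^ n ≠ 1)
    (hc : ∃ i, c i ≠ 0) :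
    {r : ℕ | 0 < r ∧ ∑ j, c j * b j ^ r = 0}.Finite :=
  (stmt_14_general b c hb0 hratio hc).subset fun _ h ↦ h.2
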